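/- For every n ≥ 1, the kernel of the Ā-module homomorphism πₙ^∞: Āⁿ → M(∞)ₙ sending the standard basis vector eᵢ to uᵢ (the projective cover of M(∞)ₙ) is isomorphic as an Ā-module to M(∞)ₙ. In particular the first syzygy of M(∞)ₙ over Ā is M(∞)ₙ itself. -/

import Mathlib

open LinearMap TensorProduct

noncomputable section

namespace HellerKronecker

variable (R : Type) [CommRing R]

/-! ### Coordinate functionals on `Fin n → Fin 4 → R` (the underlying module of `Aⁿ`,
`Zₙ^λ` and `Zₙ^∞`, in their standard `𝒪`-bases). -/

/-- The `(i,j)`-coordinate functional. -/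
def ent (n : ℕ) (i : Fin n) (j : Fin 4) : (Fin n → Fin 4 → R) →ₗ[R] R :=
  (LinearMap.proj j : (Fin 4 → R) →ₗ[R] R).comp
    (LinearMap.proj i : (Fin n → Fin 4 → R) →ₗ[R] (Fin 4 → R))

/-- The `(i+1,j)`-coordinate functional (zero at the boundary). -/
def entSucc (n : ℕ) (i : Fin n) (j : Fin 4) : (Fin n → Fin 4 → R) →ₗ[R] R :=
  if h : i.val + 1 < n then ent R n ⟨i.val + 1, h⟩ j else 0

/-- The `(i-1,j)`-coordinate functional (zero at the boundary). -/
def entPred (n : ℕ) (i : Fin n) (j : Fin 4) : (Fin n → Fin 4 → R) →ₗ[R] R :=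
  if 0 < i.val then ent R n ⟨i.val - 1, lt_of_le_of_lt (Nat.sub_le _ _) i.isLt⟩ j else 0

/-- The standard basis vector with a `1` in position `(i,j)`. -/
def bas (n : ℕ) (i : Fin n) (j : Fin 4) : Fin n → Fin 4 → R :=
  Pi.single i (Pi.single j 1)

/-- The action of `X` on `Aⁿ = (𝒪[X,Y]/(X²,Y²))ⁿ` in the basis `eᵢ, Xeᵢ, Yeᵢ, XYeᵢ`.
This is also the action of `X` on the Heller lattice `Zₙ^λ` in the basis `a_{i,j}`. -/
def opAX (n : ℕ) : (Fin n → Fin 4 → R) →ₗ[R] (Fin n → Fin 4 → R) :=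
  LinearMap.pi fun i => LinearMap.pi fun j => ![0, ent R n i 0, 0, ent R n i 2] j

/-- The action of `Y` on `Aⁿ` in the basis `eᵢ, Xeᵢ, Yeᵢ, XYeᵢ`. -/
def opAY (n : ℕ) : (Fin n → Fin 4 → R) →ₗ[R] (Fin n → Fin 4 → R) :=
  LinearMap.pi fun i => LinearMap.pi fun j => ![0, 0, ent R n i 0, ent R n i 1] j

/-- The action of `X` on the Heller lattice `Zₙ^λ` in the `𝒪`-basis
`a_{i,1} = εeᵢ, a_{i,2} = εXeᵢ, a_{i,3} = Yeᵢ − λXeᵢ − Xe_{i−1}, a_{i,4} = XYeᵢ`. -/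
def opZlX (n : ℕ) : (Fin n → Fin 4 → R) →ₗ[R] (Fin n → Fin 4 → R) := opAX R n

/-- The action of `Y` on the Heller lattice `Zₙ^λ` (uniformizer `e`, parameter `l`). -/
def opZlY (n : ℕ) (e l : R) : (Fin n → Fin 4 → R) →ₗ[R] (Fin n → Fin 4 → R) :=
  LinearMap.pi fun i => LinearMap.pi fun j =>
    ![0, l • ent R n i 0 + entSucc R n i 0, e • ent R n i 0,
      e • ent R n i 1 - l • ent R n i 2 - entSucc R n i 2] j

/-- The action of `X` on the Heller lattice `Zₙ^∞` in the `𝒪`-basis `b_{i,j}`. -/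
def opZiX (n : ℕ) (e : R) : (Fin n → Fin 4 → R) →ₗ[R] (Fin n → Fin 4 → R) :=
  LinearMap.pi fun i => LinearMap.pi fun j =>
    ![0, (if i.val = 0 then e else 1) • ent R n i 0, 0,
      (if i.val + 1 = n then e else 1) • ent R n i 2] j

/-- The action of `Y` on the Heller lattice `Zₙ^∞` in the `𝒪`-basis `b_{i,j}`. -/
def opZiY (n : ℕ) (e : R) : (Fin n → Fin 4 → R) →ₗ[R] (Fin n → Fin 4 → R) :=
  LinearMap.pi fun i => LinearMap.pi fun j =>
    ![0, entPred R n i 0, (if i.val + 1 = n then (1 : R) else e) • ent R n i 0,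
      (if i.val = 0 then (1 : R) else e) • ent R n i 1 - entPred R n i 2] j

/-! ### The modules `M(λ)ₙ` and `M(∞)ₙ`, with underlying space `Fin n → Fin 2 → R`
(coordinate `(i,0)` is `u_{i+1}`, coordinate `(i,1)` is `v_{i+1}`). -/

def entm (n : ℕ) (i : Fin n) (j : Fin 2) : (Fin n → Fin 2 → R) →ₗ[R] R :=
  (LinearMap.proj j : (Fin 2 → R) →ₗ[R] R).comp
    (LinearMap.proj i : (Fin n → Fin 2 → R) →ₗ[R] (Fin 2 → R))

def entmSucc (n : ℕ) (i : Fin n) (j : Fin 2) : (Fin n → Fin 2 → R) →ₗ[R] R :=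
  if h : i.val + 1 < n then entm R n ⟨i.val + 1, h⟩ j else 0

/-- The standard basis vector of `M(λ)ₙ`/`M(∞)ₙ`: `(i,0) ↦ uᵢ`, `(i,1) ↦ vᵢ`. -/
def basm (n : ℕ) (i : Fin n) (j : Fin 2) : Fin n → Fin 2 → R :=
  Pi.single i (Pi.single j 1)

/-- `X` on `M(λ)ₙ` : `X·uᵢ = vᵢ`, `X·vᵢ = 0`. -/
def opMlX (n : ℕ) : (Fin n → Fin 2 → R) →ₗ[R] (Fin n → Fin 2 → R) :=
  LinearMap.pi fun i => LinearMap.pi fun j => ![0, entm R n i 0] j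

/-- `Y` on `M(λ)ₙ` : `Y·uᵢ = λvᵢ + v_{i−1}`, `Y·vᵢ = 0`. -/
def opMlY (n : ℕ) (l : R) : (Fin n → Fin 2 → R) →ₗ[R] (Fin n → Fin 2 → R) :=
  LinearMap.pi fun i => LinearMap.pi fun j => ![0, l • entm R n i 0 + entmSucc R n i 0] j

/-- `X` on `M(∞)ₙ` : `X·uᵢ = v_{i−1}`, `X·vᵢ = 0`. -/
def opMiX (n : ℕ) : (Fin n → Fin 2 → R) →ₗ[R] (Fin n → Fin 2 → R) :=
  LinearMap.pi fun i => LinearMap.pi fun j => ![0, entmSucc R n i 0] j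

/-- `Y` on `M(∞)ₙ` : `Y·uᵢ = vᵢ`, `Y·vᵢ = 0`. -/
def opMiY (n : ℕ) : (Fin n → Fin 2 → R) →ₗ[R] (Fin n → Fin 2 → R) :=
  LinearMap.pi fun i => LinearMap.pi fun j => ![0, entm R n i 0] j

/-! ### Projective covers. -/

/-- The projective cover `πₙ^λ : Aⁿ → M(λ)ₙ`, `eᵢ ↦ uᵢ` (extended `A`-linearly,
an element of `Aⁿ` being recorded by its coordinates in the basis `eᵢ, Xeᵢ, Yeᵢ, XYeᵢ`). -/
def projCovMl (n : ℕ) (l : R) : (Fin n → Fin 4 → R) →ₗ[R] (Fin n → Fin 2 → R) :=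
  ∑ k : Fin n, ∑ j : Fin 4,
    (ent R n k j).smulRight
      ((![LinearMap.id, opMlX R n, opMlY R n l, (opMlX R n) ∘ₗ (opMlY R n l)] j) (basm R n k 0))

/-- The projective cover `πₙ^∞ : Aⁿ → M(∞)ₙ`, `eᵢ ↦ uᵢ`. -/
def projCovMi (n : ℕ) : (Fin n → Fin 4 → R) →ₗ[R] (Fin n → Fin 2 → R) :=
  ∑ k : Fin n, ∑ j : Fin 4,
    (ent R n k j).smulRight
      ((![LinearMap.id, opMiX R n, opMiY R n, (opMiX R n) ∘ₗ (opMiY R n)] j) (basm R n k 0))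

/-- The projective cover `π_{n,λ} : A^{2n} → Zₙ^λ`, `e_{2k−1} ↦ a_{k,1}`, `e_{2k} ↦ a_{k,3}`. -/
def projCovZl (n : ℕ) (e l : R) : (Fin (2*n) → Fin 4 → R) →ₗ[R] (Fin n → Fin 4 → R) :=
  ∑ k : Fin n, ∑ j : Fin 4,
    ((ent R (2*n) ⟨2*k.val, by have := k.isLt; omega⟩ j).smulRight
        ((![LinearMap.id, opZlX R n, opZlY R n e l, (opZlX R n) ∘ₗ (opZlY R n e l)] j)
          (bas R n k 0))
     + (ent R (2*n) ⟨2*k.val + 1, by have := k.isLt; omega⟩ j).smulRight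
        ((![LinearMap.id, opZlX R n, opZlY R n e l, (opZlX R n) ∘ₗ (opZlY R n e l)] j)
          (bas R n k 2)))

/-- Images of the standard basis vectors of `A^{2n}` under `π_{n,∞}`:
`e₁ ↦ b_{1,1}`, `e₂ ↦ b_{1,2}`, `e_{2k+1} ↦ b_{k,3}` (`1 ≤ k ≤ n−1`),
`e_{2k} ↦ b_{k,1}` (`2 ≤ k ≤ n`)  (here `s` is the 0-based index of the basis vector). -/
def tgtZi (n : ℕ) (s : Fin (2*n)) : Fin n → Fin 4 → R :=
  if s.val = 0 then bas R n ⟨0, by have := s.isLt; omega⟩ 0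
  else if s.val = 1 then bas R n ⟨0, by have := s.isLt; omega⟩ 1
  else if s.val % 2 = 0 then bas R n ⟨s.val / 2 - 1, by have := s.isLt; omega⟩ 2
  else bas R n ⟨s.val / 2, by have := s.isLt; omega⟩ 0

/-- The projective cover `π_{n,∞} : A^{2n} → Zₙ^∞`. -/
def projCovZi (n : ℕ) (e : R) : (Fin (2*n) → Fin 4 → R) →ₗ[R] (Fin n → Fin 4 → R) :=
  ∑ s : Fin (2*n), ∑ j : Fin 4,
    (ent R (2*n) s j).smulRight
      ((![LinearMap.id, opZiX R n e, opZiY R n e, (opZiX R n e) ∘ₗ (opZiY R n e)] j)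
        (tgtZi R n s))

/-- The endomorphism `Φₙ` of `Zₙ^λ` (resp. `Zₙ^∞`): the unique `A`-endomorphism sending
`a_{n,1} ↦ a_{n,4}` (resp. `b_{n,1} ↦ b_{n,4}`) and `a_{k,1} ↦ 0` for `k < n`. -/
def PhiEnd (n : ℕ) : (Fin n → Fin 4 → R) →ₗ[R] (Fin n → Fin 4 → R) :=
  LinearMap.pi fun i => LinearMap.pi fun j =>
    if i.val + 1 = n ∧ j = 3 then ent R n i 0 else 0

/-- The pull-back lattice `Eₙ^λ = {(x,y) ∈ A^{2n} ⊕ Zₙ^λ ∣ π_{n,λ}(x) = Φₙ^λ(y)}`. -/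
def El (n : ℕ) (e l : R) :
    Submodule R ((Fin (2*n) → Fin 4 → R) × (Fin n → Fin 4 → R)) :=
  LinearMap.ker ((projCovZl R n e l) ∘ₗ (LinearMap.fst R _ _)
    - (PhiEnd R n) ∘ₗ (LinearMap.snd R _ _))

/-- The pull-back lattice `Eₙ^∞ = {(x,y) ∈ A^{2n} ⊕ Zₙ^∞ ∣ π_{n,∞}(x) = Φₙ^∞(y)}`. -/
def Ei (n : ℕ) (e : R) :
    Submodule R ((Fin (2*n) → Fin 4 → R) × (Fin n → Fin 4 → R)) :=
  LinearMap.ker ((projCovZi R n e) ∘ₗ (LinearMap.fst R _ _)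
    - (PhiEnd R n) ∘ₗ (LinearMap.snd R _ _))

end HellerKronecker


namespace HellerKronecker

variable (R : Type) [CommRing R]

theorem projCovMi_apply0 (n : ℕ) (x : Fin n → Fin 4 → R) (i : Fin n) :
    projCovMi R n x i 0 = x i 0 := by
  simp [projCovMi, Fin.sum_univ_four, LinearMap.sum_apply, Finset.sum_apply, ent, opMiX, opMiY,
    basm, Pi.single_apply, apply_ite, ite_apply]

theorem projCovMi_apply1 (n : ℕ) (x : Fin n → Fin 4 → R) (i : Fin n) :
    projCovMi R n x i 1 = entSucc R n i 1 x + x i 2 := by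
  have h : projCovMi R n x i 1 =
      ∑ k : Fin n, (x k 1 * (if i.val + 1 = k.val then 1 else 0) + x k 2 * (if i = k then 1 else 0)) := by
    simp only [projCovMi, LinearMap.sum_apply, Finset.sum_apply]
    refine Finset.sum_congr rfl fun k _ => ?_
    have e : entmSucc R n i 0 (basm R n k 0) = if i.val + 1 = k.val then 1 else 0 := by
      unfold entmSucc
      split_ifs with h1 h2 h2
      · simp [entm, basm, Pi.single_apply, Fin.ext_iff, h2]
      · simp [entm, basm, Pi.single_apply, Fin.ext_iff, h2]
      · omega
      · rfl
    have e2 : entm R n i 0 (basm R n k 0) = if i = k then 1 else 0 := by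
      by_cases h : i = k <;> simp [entm, basm, Pi.single_apply, h]
    have e3 : basm R n k 0 i 1 = 0 := by
      by_cases h : i = k <;> simp [basm, Pi.single_apply, h]
    have e4 : entmSucc R n i 0 (opMiY R n (basm R n k 0)) = 0 := by
      unfold entmSucc
      split_ifs <;> simp [entm, opMiY]
    rw [Fin.sum_univ_four]
    have e5 : opMiX R n (opMiY R n (basm R n k 0)) i 1 = 0 := e4
    have e6 : opMiX R n (basm R n k 0) i 1 = if i.val + 1 = k.val then 1 else 0 := e
    have e7 : opMiY R n (basm R n k 0) i 1 = if i = k then 1 else 0 := e2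
    simp [ent, e5, e6, e7, e3]
  rw [h, Finset.sum_add_distrib]
  congr 1
  · unfold entSucc
    split_ifs with h1
    · rw [Finset.sum_eq_single ⟨i.val + 1, h1⟩]
      · simp [ent]
      · intro b _ hb
        rw [if_neg, mul_zero]
        intro h; exact hb (Fin.ext h.symm)
      · simp
    · apply Finset.sum_eq_zero
      intro k _
      rw [if_neg (by omega), mul_zero]
  · simp

/-- The embedding of the syzygy. -/
def iotaMi (n : ℕ) : (Fin n → Fin 2 → R) →ₗ[R] (Fin n → Fin 4 → R) :=
  LinearMap.pi fun i => LinearMap.pi fun j =>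
    ![0, (-1 : R) ^ i.val • entm R n i 0, (-1 : R) ^ i.val • entmSucc R n i 0,
      (-1 : R) ^ i.val • entm R n i 1] j

theorem sign_sq (k : ℕ) (a : R) : (-1 : R) ^ k * ((-1 : R) ^ k * a) = a := by
  rw [← mul_assoc, ← mul_pow]; simp

end HellerKronecker

open HellerKronecker in
/-- Over `Ā = κ[X,Y]/(X²,Y²)`, the kernel of the projective cover
`πₙ^∞ : Āⁿ → M(∞)ₙ`, `eᵢ ↦ uᵢ`, is isomorphic to `M(∞)ₙ` as an `Ā`-module. -/
theorem statement5 (κ : Type) [Field κ] [IsAlgClosed κ] (n : ℕ) (hn : 1 ≤ n) :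
    Function.Surjective (projCovMi κ n) ∧
    ∃ ι : (Fin n → Fin 2 → κ) →ₗ[κ] (Fin n → Fin 4 → κ),
      Function.Injective ι ∧
      ι ∘ₗ opMiX κ n = opAX κ n ∘ₗ ι ∧
      ι ∘ₗ opMiY κ n = opAY κ n ∘ₗ ι ∧
      LinearMap.range ι = LinearMap.ker (projCovMi κ n) := by
  have h0 := projCovMi_apply0 κ n
  have h1 := projCovMi_apply1 κ n
  refine ⟨fun m => ⟨fun i => ![m i 0, 0, m i 1, 0], ?_⟩, iotaMi κ n, ?_, ?_, ?_, ?_⟩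
  · funext i j
    fin_cases j
    · simp [h0]
    · simp only [Fin.mk_one, h1, entSucc]
      split_ifs <;> simp [ent]
  · rw [injective_iff_map_eq_zero]
    intro m hm
    funext i j
    fin_cases j
    · simpa [iotaMi, entm] using congrFun (congrFun hm i) 1
    · simpa [iotaMi, entm] using congrFun (congrFun hm i) 3
  · refine LinearMap.ext fun m => ?_
    funext i j
    fin_cases j <;> simp [iotaMi, entm, opMiX, opAX, ent, entmSucc] <;> split_ifs <;> simp
  · refine LinearMap.ext fun m => ?_
    funext i j
    fin_cases j <;> simp [iotaMi, entm, opMiY, opAY, ent, entmSucc] <;> split_ifs <;> simp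
  · ext x
    rw [LinearMap.mem_range, LinearMap.mem_ker]
    constructor
    · rintro ⟨m, rfl⟩
      funext i j
      fin_cases j
      · simp [h0, iotaMi]
      · simp only [Fin.mk_one, h1, entSucc]
        split_ifs with h <;> simp [ent, iotaMi, entm, entmSucc, h, pow_succ]
    · intro hx
      refine ⟨fun i => ![(-1) ^ i.val * x i 1, (-1) ^ i.val * x i 3], ?_⟩
      funext i j
      have a0 := h0 x i
      have a1 := h1 x i
      rw [hx] at a0 a1
      fin_cases j
      · simpa [iotaMi] using a0
      · simp [iotaMi, entm, sign_sq]
      · have a2 : x i 2 = - entSucc κ n i 1 x := by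
          simp only [Pi.zero_apply] at a1
          linear_combination -a1
        simp only [Fin.reduceFinMk, a2, entSucc]
        split_ifs with h <;> simp [iotaMi, ent, entm, entmSucc, h, pow_succ, sign_sq]
      · simp [iotaMi, entm, sign_sq]
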